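/- arXiv:1501.07316 — 4 statements merged into one kernel-verified Lean document; each statement's English description precedes it below -/
import Mathlib

section
/- For every infinite cardinal κ, there exist types A, B, C with #A = #B = κ⁺ and #C = κ and a function F : A → B → C satisfying (*) (no monochromatic K_{2,2}) together with (‡): for all a ≠ a' in A and every c ∈ C there exists b ∈ B with F a b = F a' b = c, and for all b ≠ b' in B and every c ∈ C there exists a ∈ A with F a b = F a b' = c. -/
universe u

/-- `F` has no monochromatic `K_{2,2}`. -/
def NoMonoK22 {A B C : Type*} (F : A → B → C) : Prop :=
  ¬ ∃ (a₁ a₂ : A) (b₁ b₂ : B), a₁ ≠ a₂ ∧ b₁ ≠ b₂ ∧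
      F a₁ b₁ = F a₁ b₂ ∧ F a₁ b₁ = F a₂ b₁ ∧ F a₁ b₁ = F a₂ b₂

/-!
Take `A = B = I`, a well-order of type `κ⁺`, and build a symmetric `F : I → I → C` by recursion on
`max a b`. Enumerate the triples `(x, y, c)` along `I` so that each one recurs unboundedly often.
When the vertex `ξ` is reached with its triple `(x, y, c)`, there are at most `κ` earlier vertices,
so they can be joined to `ξ` by pairwise distinct colors other than `c`. The only colors repeated
are `F x ξ = F y ξ = c`, and this is done only if no `z < ξ` already has `F x z = F y z = c`.
A monochromatic `K_{2,2}` with largest vertex `ξ` would need such a `z`.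
-/

open Set Cardinal
open scoped Ordinal

theorem exists_forall_of_forall_exists_extension {α : Type*} [Preorder α] [WellFoundedLT α]
    {β : α → Type*} {Q : ∀ a, (∀ b : Iio a, β b) → β a → Prop} (hQ : ∀ a p, ∃ b, Q a p b) :
    ∃ f : ∀ a, β a, ∀ a, Q a (fun b ↦ f b) (f a) := by
  choose next hnext using hQ
  let f : ∀ a, β a := WellFoundedLT.fix fun a p ↦ next a fun b ↦ p b b.2
  have hf : ∀ a, f a = next a fun b ↦ f b := WellFoundedLT.fix_eq _
  exact ⟨f, fun a ↦ hf a ▸ hnext a _⟩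

theorem exists_injective_forall_notMem_finset {X C : Type*} [Infinite C] (ι : X ↪ C)
    (t : Finset C) : ∃ g : X → C, Function.Injective g ∧ ∀ x, g x ∉ t := by
  obtain ⟨e⟩ := Cardinal.eq.1 (mk_compl_finset_of_infinite t).symm
  exact ⟨fun x ↦ e (ι x), Subtype.val_injective.comp (e.injective.comp ι.injective),
    fun x ↦ (e (ι x)).2⟩

theorem exists_forall_not_bddAbove_preimage_singleton {I P : Type u} [Preorder I]
    [Infinite I] [Nonempty P] (hI : ∀ i : I, #(Iic i) < #I) (hP : #P ≤ #I) :
    ∃ f : I → P, ∀ p, ¬ BddAbove (f ⁻¹' {p}) := by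
  have hIP : #I = #(I × P) := by
    rw [mk_prod, Cardinal.lift_id, Cardinal.lift_id, mul_eq_left (aleph0_le_mk I) hP (mk_ne_zero P)]
  obtain ⟨e⟩ := Cardinal.eq.1 hIP
  refine ⟨fun i ↦ (e i).2, fun p ⟨b, hb⟩ ↦ (hI b).not_ge ?_⟩
  have hmem (i : I) : e.symm (i, p) ∈ Iic b := hb (by simp)
  refine mk_le_of_injective (f := fun i ↦ (⟨e.symm (i, p), hmem i⟩ : Iic b)) fun i j hij ↦ ?_
  simpa using hij

section Row

variable {X C : Type*}

/-- The condition on the row `r` and the diagonal entry `d` of a new vertex under which adding it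
to the symmetric coloring `F` of `X` creates no monochromatic `K_{2,2}`. -/
def IsSafeRow (F : X → X → C) (r : X → C) (d : C) : Prop :=
  (∀ u, r u ≠ d) ∧ ∀ u v z, u ≠ v → r u = r v → F u z = r u → F v z ≠ r u

theorem exists_isSafeRow_forall_mem_eq [Infinite C] (ι : X ↪ C) {F : X → X → C} {s : Set X} {c : C}
    (hs : ∀ u ∈ s, ∀ v ∈ s, u ≠ v → ∀ z, F u z = c → F v z ≠ c) :
    ∃ r d, IsSafeRow F r d ∧ ∀ u ∈ s, r u = c := by
  classical
  obtain ⟨d, hdc⟩ := exists_ne c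
  obtain ⟨g, hg, hgt⟩ := exists_injective_forall_notMem_finset ι {c, d}
  simp only [Finset.mem_insert, Finset.mem_singleton, not_or] at hgt
  refine ⟨s.piecewise (fun _ ↦ c) g, d, ⟨fun u ↦ ?_, fun u v z huv hr ↦ ?_⟩,
    fun u hu ↦ by simp [hu]⟩
  · by_cases hu : u ∈ s
    · simpa [hu] using hdc.symm
    · simpa [hu] using (hgt u).2
  · by_cases hu : u ∈ s <;> by_cases hv : v ∈ s <;>
      simp only [hu, hv, not_false_eq_true, piecewise_eq_of_mem, piecewise_eq_of_notMem] at hr ⊢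
    · exact hs u hu v hv huv z
    · exact absurd hr.symm (hgt v).1
    · exact absurd hr (hgt u).1
    · exact absurd (hg hr) huv

theorem exists_isSafeRow_meets_demand {I : Type*} [Preorder I] [Infinite C] {ξ : I}
    (ι : Iio ξ ↪ C) (F : Iio ξ → Iio ξ → C) (x y : I) (c : C) :
    ∃ r : I → C, IsSafeRow F (fun u ↦ r u) (r ξ) ∧ ∀ (hx : x < ξ) (hy : y < ξ),
      (∃ z, F ⟨x, hx⟩ z = c ∧ F ⟨y, hy⟩ z = c) ∨ (r x = c ∧ r y = c) := by
  suffices ∃ r d, IsSafeRow F r d ∧ ∀ (hx : x < ξ) (hy : y < ξ),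
      (∃ z, F ⟨x, hx⟩ z = c ∧ F ⟨y, hy⟩ z = c) ∨ (r ⟨x, hx⟩ = c ∧ r ⟨y, hy⟩ = c) by
    obtain ⟨r, d, hr, hxy⟩ := this
    have hlt (u : I) (hu : u < ξ) : Function.extend Subtype.val r (fun _ ↦ d) u = r ⟨u, hu⟩ :=
      Subtype.val_injective.extend_apply r _ ⟨u, hu⟩
    have hξ : Function.extend Subtype.val r (fun _ ↦ d) ξ = d :=
      Function.extend_apply' _ _ _ fun ⟨u, hu⟩ ↦ u.2.ne hu
    refine ⟨Function.extend Subtype.val r fun _ ↦ d, ?_, fun hx hy ↦ ?_⟩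
    · simpa only [hξ, Subtype.val_injective.extend_apply] using hr
    · simpa only [hlt x hx, hlt y hy] using hxy hx hy
  by_cases hmet : ∀ (hx : x < ξ) (hy : y < ξ), ∃ z, F ⟨x, hx⟩ z = c ∧ F ⟨y, hy⟩ z = c
  · obtain ⟨r, d, hr, -⟩ := exists_isSafeRow_forall_mem_eq ι (F := F) (s := ∅) (c := c) (by simp)
    exact ⟨r, d, hr, fun hx hy ↦ .inl (hmet hx hy)⟩
  · push Not at hmet
    obtain ⟨hx, hy, hunmet⟩ := hmet
    have hpair : ∀ u ∈ ({⟨x, hx⟩, ⟨y, hy⟩} : Set (Iio ξ)), ∀ v ∈ ({⟨x, hx⟩, ⟨y, hy⟩} : Set (Iio ξ)),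
        u ≠ v → ∀ z, F u z = c → F v z ≠ c := by
      rintro u (rfl | rfl) v (rfl | rfl) huv z hu hv
      · exact huv rfl
      · exact hunmet z hu hv
      · exact hunmet z hv hu
      · exact huv rfl
    obtain ⟨r, d, hr, hrs⟩ := exists_isSafeRow_forall_mem_eq ι hpair
    exact ⟨r, d, hr, fun _ _ ↦ .inr ⟨hrs _ (by simp), hrs _ (by simp)⟩⟩

end Row

section Coloring

variable {I C : Type*} [LinearOrder I]

theorem noMonoK22_of_forall_isSafeRow {F : I → I → C} (hF : ∀ a b, F a b = F b a)
    (hsafe : ∀ ξ, IsSafeRow (fun u z : Iio ξ ↦ F u z) (fun u ↦ F ξ u) (F ξ ξ)) :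
    NoMonoK22 F := by
  have no_max {a ξ b₁ b₂ : I} {c : C} (ha : a < ξ) (hb : b₁ < b₂) (hbξ : b₂ ≤ ξ)
      (h₁ : F a b₁ = c) (h₂ : F a b₂ = c) (h₃ : F ξ b₁ = c) (h₄ : F ξ b₂ = c) : False := by
    rcases hbξ.eq_or_lt with rfl | hbξ
    · exact (hsafe b₂).1 ⟨b₁, hb⟩ (h₃.trans h₄.symm)
    · exact (hsafe ξ).2 ⟨b₁, hb.trans hbξ⟩ ⟨b₂, hbξ⟩ ⟨a, ha⟩ (Subtype.coe_ne_coe.1 hb.ne)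
        (h₃.trans h₄.symm) ((hF _ _).trans (h₁.trans h₃.symm))
        ((hF _ _).trans (h₂.trans h₃.symm))
  rintro ⟨a₁, a₂, b₁, b₂, ha, hb, h₁₂, h₂₁, h₂₂⟩
  wlog ha_lt : a₁ < a₂ generalizing a₁ a₂
  · exact this a₂ a₁ ha.symm (by grind) (by grind) (by grind) (by grind)
  wlog hb_lt : b₁ < b₂ generalizing b₁ b₂
  · exact this b₂ b₁ hb.symm (by grind) (by grind) (by grind) (by grind)
  rcases le_total b₂ a₂ with hle | hle
  · exact no_max ha_lt hb_lt hle rfl h₁₂.symm h₂₁.symm h₂₂.symm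
  · exact no_max hb_lt ha_lt hle (hF _ _) ((hF _ _).trans h₂₁.symm) ((hF _ _).trans h₁₂.symm)
      ((hF _ _).trans h₂₂.symm)

/-- The symmetric coloring whose row at `a`, up to and including the diagonal, is `f a`; the values
`f a b` with `a < b` are ignored. -/
def symmOfRows (f : I → I → C) (a b : I) : C := f (max a b) (min a b)

theorem symmOfRows_comm (f : I → I → C) (a b : I) : symmOfRows f a b = symmOfRows f b a := by
  rw [symmOfRows, symmOfRows, max_comm, min_comm]

theorem symmOfRows_of_le (f : I → I → C) {a b : I} (h : b ≤ a) : symmOfRows f a b = f a b := by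
  rw [symmOfRows, max_eq_left h, min_eq_right h]

theorem exists_symm_isSafeRow_meets_demands [WellFoundedLT I] [Infinite C]
    (hI : ∀ ξ : I, Nonempty (Iio ξ ↪ C)) (demand : I → I × I × C) :
    ∃ F : I → I → C, (∀ a b, F a b = F b a) ∧
      (∀ ξ, IsSafeRow (fun u z : Iio ξ ↦ F u z) (fun u ↦ F ξ u) (F ξ ξ)) ∧
      ∀ ξ x y c, demand ξ = (x, y, c) → x < ξ → y < ξ → ∃ z, F x z = c ∧ F y z = c := by
  obtain ⟨f, hf⟩ := exists_forall_of_forall_exists_extension fun ξ (p : Iio ξ → I → C) ↦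
    exists_isSafeRow_meets_demand (hI ξ).some
      (fun u z ↦ p ⟨max u z, max_lt u.2 z.2⟩ (min u z)) (demand ξ).1 (demand ξ).2.1 (demand ξ).2.2
  refine ⟨symmOfRows f, symmOfRows_comm f, fun ξ ↦ ?_, fun ξ x y c hξ hx hy ↦ ?_⟩
  · have hrow : (fun u : Iio ξ ↦ symmOfRows f ξ u) = fun u : Iio ξ ↦ f ξ u :=
      funext fun u ↦ symmOfRows_of_le f u.2.le
    rw [hrow, symmOfRows_of_le f le_rfl]
    exact (hf ξ).1
  · have hdemand := (hf ξ).2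
    rw [hξ] at hdemand
    rcases hdemand hx hy with ⟨z, hxz, hyz⟩ | ⟨hxξ, hyξ⟩
    · exact ⟨z, hxz, hyz⟩
    · refine ⟨ξ, ?_, ?_⟩
      · rw [symmOfRows_comm, symmOfRows_of_le f hx.le, hxξ]
      · rw [symmOfRows_comm, symmOfRows_of_le f hy.le, hyξ]

end Coloring

theorem exists_symm_noMonoK22_forall_exists {I C : Type u} [LinearOrder I] [WellFoundedLT I]
    [Infinite C] (hI : ord #I = typeLT I) (hIC : #I = Order.succ #C) :
    ∃ F : I → I → C, (∀ a b, F a b = F b a) ∧ NoMonoK22 F ∧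
      ∀ x y c, ∃ z, F x z = c ∧ F y z = c := by
  have hCI : #C ≤ #I := hIC ▸ Order.le_succ #C
  have : Infinite I := infinite_iff.2 ((aleph0_le_mk C).trans hCI)
  have hIic (ξ : I) : #(Iic ξ) < #I := mk_Iic_lt ξ hI (aleph0_le_mk I)
  have hIio (ξ : I) : Nonempty (Iio ξ ↪ C) := Order.lt_succ_iff.1 (hIC ▸ mk_Iio_lt ξ hI)
  have hdemands : #(I × I × C) ≤ #I := by
    simp only [mk_prod, Cardinal.lift_id, mul_eq_left (aleph0_le_mk I) hCI (mk_ne_zero C),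
      mul_eq_self (aleph0_le_mk I), le_refl]
  obtain ⟨demand, hdemand⟩ := exists_forall_not_bddAbove_preimage_singleton hIic hdemands
  obtain ⟨F, hsymm, hsafe, hmet⟩ := exists_symm_isSafeRow_meets_demands hIio demand
  refine ⟨F, hsymm, noMonoK22_of_forall_isSafeRow hsymm hsafe, fun x y c ↦ ?_⟩
  obtain ⟨ξ, hξ, hlt⟩ := not_bddAbove_iff.1 (hdemand (x, y, c)) (max x y)
  exact hmet ξ x y c hξ (max_lt_iff.1 hlt).1 (max_lt_iff.1 hlt).2

theorem stmt6 (κ : Cardinal.{u}) (hκ : Cardinal.aleph0 ≤ κ) :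
    ∃ (A B C : Type u) (F : A → B → C),
      Cardinal.mk A = Order.succ κ ∧ Cardinal.mk B = Order.succ κ ∧
      Cardinal.mk C = κ ∧
      NoMonoK22 F ∧
      (∀ a a' : A, a ≠ a' → ∀ c : C, ∃ b : B, F a b = c ∧ F a' b = c) ∧
      (∀ b b' : B, b ≠ b' → ∀ c : C, ∃ a : A, F a b = c ∧ F a b' = c) := by
  have hC : #κ.out = κ := mk_out κ
  have hI : #(Order.succ κ).ord.ToType = Order.succ κ := mk_ord_toType _
  have : Infinite κ.out := infinite_iff.2 (hκ.trans_eq hC.symm)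
  obtain ⟨F, hsymm, hK22, hmet⟩ := exists_symm_noMonoK22_forall_exists
    (I := (Order.succ κ).ord.ToType) (C := κ.out) (by simp) (by rw [hI, hC])
  refine ⟨_, _, _, F, hI, hI, hC, hK22, fun a a' _ ↦ hmet a a', fun b b' _ c ↦ ?_⟩
  obtain ⟨a, hb, hb'⟩ := hmet b b' c
  exact ⟨a, (hsymm a b).trans hb, (hsymm a b').trans hb'⟩
end

section
/- Let κ be an infinite cardinal, let O be the ordinals below κ⁺, let C be a type, and let F : O → O → C satisfy (*) (no monochromatic K_{2,2}). Suppose A₀ ⊆ O is closed and unbounded in κ⁺, every element of A₀ is ≥ κ, and for every α ∈ A₀ and every c ∈ C there exists β < α with F α β = c. Then F is B-inextensible: for every g : O → C there exist α₁ ≠ α₂ in O and β ∈ O with F α₁ β = F α₂ β = g α₁ = g α₂. -/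
universe u v

/-- Adjoining any new vertex to `B` would create a monochromatic `K_{2,2}`. -/
def BInextensible {A B C : Type*} (F : A → B → C) : Prop :=
  ∀ g : A → C, ∃ a₁ a₂ : A, a₁ ≠ a₂ ∧ ∃ b : B,
    F a₁ b = F a₂ b ∧ F a₂ b = g a₁ ∧ g a₁ = g a₂

/-
Fix `g`. For `x ∈ A₀` pick `k x c < x` with `F x (k x c) = c`. The map `x ↦ k x (g x)` is
regressive, so by Fodor's lemma it has a constant value `b` on a stationary set, on which therefore
`F x b = g x`. Fixing `a₀ ∈ A₀`, the map `x ↦ k a₀ (g x)` is regressive above `a₀`, so a second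
application of Fodor's lemma shrinks the stationary set to one on which `g x = F a₀ (k a₀ (g x))` is
constant as well. Any two elements of that set witness inextensibility.
-/

open Cardinal Order Set

section Fodor

variable {α : Type*} [LinearOrder α] {s t : Set α}

theorem isClub_Ici (a : α) : IsClub (Ici a) where
  dirSupClosed := (isUpperSet_Ici a).dirSupClosed
  isCofinal b := ⟨max a b, le_max_left a b, le_max_right a b⟩

/-- The diagonal intersection of a family of sets indexed by an ordered type: the points `a` that
belong to every set whose index is strictly below `a`. -/
def diagInter (C : α → Set α) : Set α :=
  {a | ∀ b < a, a ∈ C b}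

theorem dirSupClosed_diagInter {C : α → Set α} (hC : ∀ b, DirSupClosed (C b)) :
    DirSupClosed (diagInter C) := by
  refine dirSupClosed_iff_of_linearOrder.2 fun d hd _ a ha b hba ↦ ?_
  obtain ⟨x, hxd, hbx⟩ := (lt_isLUB_iff ha).1 hba
  have hlub : IsLUB (d ∩ Ici x) a := ha.inter_Ici_of_mem hxd
  have hsub : d ∩ Ici x ⊆ C b := fun y hy ↦ hd hy.1 b (hbx.trans_le hy.2)
  exact dirSupClosed_iff_of_linearOrder.1 (hC b) hsub ⟨x, hxd, self_mem_Ici⟩ hlub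

theorem bddAbove_of_countable (hα : ℵ₀ < cof α) (hs : s.Countable) : BddAbove s :=
  .of_not_isCofinal fun h ↦ ((cof_le h).trans hs.le_aleph0).not_gt hα

theorem exists_gt_of_one_lt_cof (hα : 1 < cof α) (a : α) : ∃ b, a < b := by
  have := cof_ne_one_iff.1 hα.ne'
  simpa only [not_le] using exists_not_le a

theorem nontrivial_of_isStationary (hα : 1 < cof α) (hs : IsStationary s) : s.Nontrivial := by
  obtain ⟨x, hx⟩ := hs.nonempty
  obtain ⟨y, hxy⟩ := exists_gt_of_one_lt_cof hα x
  obtain ⟨z, hz, hyz⟩ := hs (isClub_Ici y)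
  exact ⟨x, hx, z, hz, (hxy.trans_le hyz).ne⟩

variable [WellFoundedLT α]

theorem exists_isLUB_of_bddAbove (hs : BddAbove s) : ∃ a, IsLUB s a := by
  obtain ⟨a, ha, hmin⟩ := wellFounded_lt.has_min (upperBounds s) hs
  exact ⟨a, ha, fun b hb ↦ not_lt.1 (hmin b hb)⟩

theorem isStationary_inter_of_isClub (hα : cof α ≠ ℵ₀) (hs : IsStationary s) (ht : IsClub t) :
    IsStationary (s ∩ t) :=
  fun u hu ↦ by simpa only [inter_assoc] using hs (ht.inter hα hu)

variable [IsRegularCardinalOrder α]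

theorem isClub_biInter_Iio (hα : cof α ≠ ℵ₀) {C : α → Set α} (hC : ∀ b, IsClub (C b)) (a : α) :
    IsClub (⋂ b ∈ Iio a, C b) := by
  rw [biInter_eq_iInter]
  refine .iInter hα ?_ fun b ↦ hC b
  rw [Cardinal.lift_lt, cof_eq_cardinalMk]
  exact mk_Iio_lt a ord_cardinalMk

theorem isClub_diagInter (hα : ℵ₀ < cof α) {C : α → Set α} (hC : ∀ b, IsClub (C b)) :
    IsClub (diagInter C) where
  dirSupClosed := dirSupClosed_diagInter fun b ↦ (hC b).dirSupClosed
  isCofinal a := by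
    choose h h_mem le_h using fun x ↦ (isClub_biInter_Iio hα.ne' hC x).isCofinal x
    let u : ℕ → α := fun n ↦ h^[n] a
    have u_succ (n : ℕ) : u (n + 1) = h (u n) := Function.iterate_succ_apply' h n a
    have u_mono : Monotone u := monotone_nat_of_le_succ fun n ↦ (u_succ n).symm ▸ le_h (u n)
    obtain ⟨c, hc⟩ := exists_isLUB_of_bddAbove (bddAbove_of_countable hα (countable_range u))
    refine ⟨c, fun b hbc ↦ ?_, hc.1 ⟨0, rfl⟩⟩
    obtain ⟨_, ⟨n, rfl⟩, hbn⟩ := (lt_isLUB_iff hc).1 hbc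
    have tail_mem (m : ℕ) : u (m + n + 1) ∈ C b := by
      rw [u_succ]
      exact mem_iInter₂.1 (h_mem _) b (hbn.trans_le (u_mono (n.le_add_left m)))
    have tail_lub : IsLUB (range fun m ↦ u (m + n + 1)) c := by
      refine ⟨?_, fun d hd ↦ hc.2 ?_⟩
      · rintro _ ⟨m, rfl⟩
        exact hc.1 ⟨_, rfl⟩
      · rintro _ ⟨m, rfl⟩
        exact (u_mono (by lia)).trans (hd ⟨m, rfl⟩)
    exact (hC b).isLUB_mem (range_subset_iff.2 tail_mem) (range_nonempty _) tail_lub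

-- Fodor's lemma: otherwise `s` would meet the diagonal intersection of clubs missing the fibers.
theorem exists_isStationary_sep_eq_of_forall_lt (hα : ℵ₀ < cof α) (hs : IsStationary s)
    {f : α → α} (hf : ∀ x ∈ s, f x < x) : ∃ b, IsStationary {x ∈ s | f x = b} := by
  by_contra! h
  choose C hC hdisj using fun b ↦ not_isStationary_iff.1 (h b)
  obtain ⟨x, hxs, hxC⟩ := hs (isClub_diagInter hα hC)
  exact disjoint_left.1 (hdisj (f x)) ⟨hxs, rfl⟩ (hxC _ (hf x hxs))

end Fodor

theorem stmt7_general {α : Type*} [LinearOrder α] [WellFoundedLT α] [IsRegularCardinalOrder α]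
    (hα : ℵ₀ < cof α) {C : Type*} {F : α → α → C} {S : Set α} (hS : IsStationary S)
    (honto : ∀ a ∈ S, ∀ c : C, ∃ β < a, F a β = c) : BInextensible F := by
  intro g
  obtain ⟨a₀, ha₀⟩ := hS.nonempty
  have : Nonempty α := ⟨a₀⟩
  choose! k k_lt F_k using honto
  obtain ⟨b, hT⟩ := exists_isStationary_sep_eq_of_forall_lt hα hS fun x hx ↦ k_lt x hx (g x)
  have hT' := isStationary_inter_of_isClub hα.ne' hT (isClub_Ici a₀)
  obtain ⟨b', hU⟩ := exists_isStationary_sep_eq_of_forall_lt hα hT' (f := fun x ↦ k a₀ (g x))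
    fun x hx ↦ (k_lt a₀ ha₀ (g x)).trans_le hx.2
  obtain ⟨x, ⟨⟨⟨hx, hxb⟩, -⟩, hxb'⟩, y, ⟨⟨⟨hy, hyb⟩, -⟩, hyb'⟩, hxy⟩ :=
    nontrivial_of_isStationary (one_lt_aleph0.trans hα) hU
  have hFx : F x b = g x := hxb ▸ F_k x hx (g x)
  have hFy : F y b = g y := hyb ▸ F_k y hy (g y)
  have hg : g x = g y := by
    rw [← F_k a₀ ha₀ (g x), ← F_k a₀ ha₀ (g y), hxb', hyb']
  exact ⟨x, y, hxy, b, by rw [hFx, hFy, hg], by rw [hFy, hg], hg⟩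

theorem cof_Iio_ord {c : Cardinal.{u}} (hc : c.IsRegular) :
    cof {o : Ordinal.{u} // o < c.ord} = lift.{u + 1} c := by
  change cof (Iio c.ord) = _
  rw [Ordinal.cof_Iio, ← Ordinal.lift_cof, hc.cof_ord]

theorem isRegularCardinalOrder_Iio_ord {c : Cardinal.{u}} (hc : c.IsRegular) :
    IsRegularCardinalOrder {o : Ordinal.{u} // o < c.ord} where
  type_lt_le_ord_cof := by
    rw [cof_Iio_ord hc, ← lift_ord]
    exact (Ordinal.type_lt_Iio c.ord).le

theorem isClub_of_sSup_mem {o : Ordinal.{u}} {A : Set {x : Ordinal.{u} // x < o}}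
    (hunbdd : IsCofinal A)
    (hclosed : ∀ S ⊆ A, S.Nonempty → ∀ hb : sSup (Subtype.val '' S) < o,
      IsSuccLimit (sSup (Subtype.val '' S)) → ⟨sSup (Subtype.val '' S), hb⟩ ∈ A) :
    IsClub A where
  dirSupClosed := dirSupClosed_iff_of_linearOrder.2 fun S hSA hS a ha ↦ by
    by_cases haS : a ∈ S
    · exact hSA haS
    have hlub : IsLUB (Subtype.val '' S) a.1 := (principalSegIio o).isNormal.map_isLUB ha hS
    have hsup : sSup (Subtype.val '' S) = a.1 := hlub.csSup_eq (hS.image _)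
    have hlim : IsSuccLimit a.1 := hlub.isSuccLimit_of_notMem (hS.image _)
      (Subtype.val_injective.mem_set_image.not.2 haS)
    simpa only [hsup] using hclosed S hSA hS (hsup ▸ a.2) (hsup ▸ hlim)
  isCofinal := hunbdd

theorem stmt7 (κ : Cardinal.{u}) (hκ : Cardinal.aleph0 ≤ κ) {C : Type v}
    (F : {o : Ordinal.{u} // o < (Order.succ κ).ord} →
         {o : Ordinal.{u} // o < (Order.succ κ).ord} → C)
    (hF : NoMonoK22 F)
    (A₀ : Set {o : Ordinal.{u} // o < (Order.succ κ).ord})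
    -- `A₀` is unbounded below `κ⁺`
    (hunbdd : ∀ o : {o : Ordinal.{u} // o < (Order.succ κ).ord}, ∃ a ∈ A₀, o ≤ a)
    -- `A₀` is closed: it contains the supremum of each of its nonempty
    -- (bounded below `κ⁺`) subsets with limit supremum
    (hclosed : ∀ S : Set {o : Ordinal.{u} // o < (Order.succ κ).ord},
      S ⊆ A₀ → S.Nonempty →
      ∀ hb : sSup (Subtype.val '' S) < (Order.succ κ).ord,
        Order.IsSuccLimit (sSup (Subtype.val '' S)) →
        (⟨sSup (Subtype.val '' S), hb⟩ :
          {o : Ordinal.{u} // o < (Order.succ κ).ord}) ∈ A₀)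
    -- every element of `A₀` is `≥ κ`
    (hge : ∀ a ∈ A₀, κ.ord ≤ a.1)
    -- for every `α ∈ A₀` and every color `c` there is `β < α` with `F α β = c`
    (honto : ∀ a ∈ A₀, ∀ c : C, ∃ β, β < a ∧ F a β = c) :
    BInextensible F := by
  have hreg := isRegular_succ hκ
  have hcof : ℵ₀ < cof {o : Ordinal.{u} // o < (succ κ).ord} := by
    rw [cof_Iio_ord hreg, aleph0_lt_lift]
    exact hκ.trans_lt (lt_succ κ)
  have : Nonempty {o : Ordinal.{u} // o < (succ κ).ord} := ⟨⟨0, hreg.ord_pos⟩⟩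
  have := isRegularCardinalOrder_Iio_ord hreg
  exact stmt7_general hcof ((isClub_of_sSup_mem hunbdd hclosed).isStationary hcof.ne') honto
end

section
/- For every infinite cardinal κ, there exist types A, B, C with #A = #B = κ⁺ and #C = κ and two functions F₁, F₂ : A → B → C such that each Fᵢ satisfies (*) (no monochromatic K_{2,2}) and is C-maximal (both A-inextensible and B-inextensible), and F₁ and F₂ are non-isomorphic: there are no bijections σ : A ≃ A, τ : B ≃ B, ρ : C ≃ C with ρ (F₁ a b) = F₂ (σ a) (τ b) for all a ∈ A and b ∈ B. -/
universe u

/-- Adjoining any new vertex to `A` would create a monochromatic `K_{2,2}`. -/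
def AInextensible {A B C : Type*} (F : A → B → C) : Prop :=
  ∀ h : B → C, ∃ b₁ b₂ : B, b₁ ≠ b₂ ∧ ∃ a : A,
    F a b₁ = F a b₂ ∧ F a b₂ = h b₁ ∧ h b₁ = h b₂

/-!
Index rows and columns by the same well-order `I` of type `κ⁺` and build a symmetric colouring one
row at a time: row `α` fixes all colours `F α x` with `x ≤ α`. There are only `κ` such `x`, so the
row can be made injective, except that it may be made to repeat one prescribed colour `c` on one
prescribed pair `{x, y}` of smaller elements. Doing this only for pairs that no earlier row joins in
colour `c` keeps the colouring free of monochromatic `K_{2,2}`. Bookkeeping makes every pair from a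
prescribed set `S` get joined in every colour, and inextensibility follows by the pigeonhole
principle as soon as `#S > κ`.

Taking `S` to be everything gives `F₁`. Taking `S` to omit only the least element `p` of `I` gives
`F₂`, where `p` and its successor are joined by row `p` only, hence in at most one colour.
-/

open Set
open scoped Cardinal

section Cherry

variable {A B C : Type*}

/-- `a` is the centre of a cherry (a path with two edges) with leaves `x` and `y`, both of whose
edges have colour `c`. A monochromatic `K_{2,2}` consists of two cherries with different centres,
the same colour and the same pair of distinct leaves. -/
def IsCherry (F : A → B → C) (c : C) (a : A) (x y : B) : Prop :=
  F a x = c ∧ F a y = c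

/-- Any two distinct vertices of `S` are the leaves of a cherry in every colour. This is the source
of inextensibility, and with `S = univ` it is the invariant that separates the two colourings. -/
def SaturatedOn (F : A → B → C) (S : Set B) : Prop :=
  S.Pairwise fun x y => ∀ c, ∃ a, IsCherry F c a x y

theorem IsCherry.symm {F : A → B → C} {c : C} {a : A} {x y : B} (h : IsCherry F c a x y) :
    IsCherry F c a y x :=
  And.symm h

theorem noMonoK22_iff_isCherry {F : A → B → C} :
    NoMonoK22 F ↔ ∀ ⦃c a₁ a₂ x y⦄, a₁ ≠ a₂ → x ≠ y →
      IsCherry F c a₁ x y → ¬ IsCherry F c a₂ x y := by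
  constructor
  · rintro hF _ a₁ a₂ x y ha hxy ⟨rfl, h₁⟩ ⟨h₂, h₃⟩
    exact hF ⟨a₁, a₂, x, y, ha, hxy, h₁.symm, h₂.symm, h₃.symm⟩
  · rintro hF ⟨a₁, a₂, x, y, ha, hxy, h₁, h₂, h₃⟩
    exact hF ha hxy ⟨rfl, h₁.symm⟩ ⟨h₂.symm, h₃.symm⟩

theorem SaturatedOn.image {A' B' C' : Type*} {F : A → B → C} {F' : A' → B' → C'} {S : Set B}
    (hF : SaturatedOn F S) {σ : A → A'} {τ : B → B'} {ρ : C → C'} (hρ : ρ.Surjective)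
    (h : ∀ a b, ρ (F a b) = F' (σ a) (τ b)) : SaturatedOn F' (τ '' S) := by
  rintro _ ⟨x, hx, rfl⟩ _ ⟨y, hy, rfl⟩ hxy c'
  obtain ⟨c, rfl⟩ := hρ c'
  obtain ⟨a, hax, hay⟩ := hF hx hy (ne_of_apply_ne τ hxy) c
  exact ⟨σ a, by rw [← h, hax], by rw [← h, hay]⟩

end Cherry

theorem SaturatedOn.aInextensible {A : Type*} {B C : Type u} {F : A → B → C} {S : Set B}
    (hF : SaturatedOn F S) (hS : #C < #S) : AInextensible F := by
  intro h
  have hinj : ¬ Function.Injective fun s : S => h s := fun hinj =>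
    hS.not_ge (Cardinal.mk_le_of_injective hinj)
  obtain ⟨x, y, hxy, hne⟩ := Function.not_injective_iff.1 hinj
  have hne' : (x : B) ≠ y := Subtype.coe_ne_coe.2 hne
  obtain ⟨a, hax, hay⟩ := hF x.2 y.2 hne' (h x)
  exact ⟨x, y, hne', a, hax.trans hay.symm, hay, hxy⟩

theorem AInextensible.bInextensible_of_symm {I C : Type*} {F : I → I → C}
    (hF : AInextensible F) (hsymm : ∀ a b, F a b = F b a) : BInextensible F := by
  intro g
  obtain ⟨x, y, hxy, a, h⟩ := hF g
  exact ⟨x, y, hxy, a, by simpa only [hsymm a] using h⟩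

/-- `F` is a `C`-maximal colouring without monochromatic `K_{2,2}`: no vertex can be adjoined to
either side. -/
def IsMaximalK22Free {A B C : Type*} (F : A → B → C) : Prop :=
  NoMonoK22 F ∧ AInextensible F ∧ BInextensible F

section Economical

variable {I C : Type*} [LinearOrder I] {S : Set I} {F : I → I → C}

/-- Among the cherries whose centre `α` is at least as large as both leaves, only those needed for
saturation on `S` occur: the leaves lie in `S`, and no smaller centre carries the same leaves in the
same colour. -/
def EconomicalOn (F : I → I → C) (S : Set I) : Prop :=
  ∀ ⦃c α x y⦄, x ≤ α → y ≤ α → x ≠ y → IsCherry F c α x y →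
    x ∈ S ∧ y ∈ S ∧ ∀ β < α, ¬ IsCherry F c β x y

theorem EconomicalOn.noMonoK22 (hF : EconomicalOn F S) (hsymm : ∀ a b, F a b = F b a) :
    NoMonoK22 F := by
  rw [noMonoK22_iff_isCherry]
  intro c a a' x y ha hxy h h'
  -- By symmetry, the largest of the four vertices may be taken to be the centre `a`.
  wlog haa : a' ≤ a generalizing a a'
  · exact this ha.symm h' h (le_of_not_ge haa)
  wlog hyx : y ≤ x generalizing x y
  · exact this hxy.symm h.symm h'.symm (le_of_not_ge hyx)
  wlog hxa : x ≤ a generalizing a a' x y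
  · exact this hxy hyx ha ⟨hsymm a x ▸ h.1, hsymm a' x ▸ h'.1⟩ ⟨hsymm a y ▸ h.2, hsymm a' y ▸ h'.2⟩
      haa (le_of_not_ge hxa)
  exact (hF hxa (hyx.trans hxa) hxy h).2.2 a' (haa.lt_of_ne ha.symm) h'

theorem EconomicalOn.not_saturatedOn_univ [Nontrivial C] (hF : EconomicalOn F S) {p q : I}
    (hp : IsMin p) (hpS : p ∉ S) (hpq : p ⋖ q) : ¬ SaturatedOn F univ := by
  intro hsat
  obtain ⟨c, hc⟩ := exists_ne (F p p)
  obtain ⟨a, ha⟩ := hsat (mem_univ p) (mem_univ q) hpq.ne c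
  obtain hqa | haq := le_or_gt q a
  · exact hpS (hF (hpq.le.trans hqa) hqa hpq.ne ha).1
  · obtain rfl : a = p := hp.eq_of_le (hpq.le_of_lt haq)
    exact hc ha.1.symm

end Economical

theorem EconomicalOn.isMaximalK22Free {I C : Type u} [LinearOrder I] {F : I → I → C} {S : Set I}
    (hF : EconomicalOn F S) (hsat : SaturatedOn F S) (hsymm : ∀ a b, F a b = F b a)
    (hS : #C < #S) : IsMaximalK22Free F :=
  have hA := hsat.aInextensible hS
  ⟨hF.noMonoK22 hsymm, hA, hA.bInextensible_of_symm hsymm⟩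

theorem exists_symm_forall_row {I C : Type*} [LinearOrder I] [WellFoundedLT I]
    {P : ∀ α : I, (Iio α → Iio α → C) → (Iic α → C) → Prop} (hP : ∀ α G, ∃ r, P α G r) :
    ∃ F : I → I → C, (∀ a b, F a b = F b a) ∧
      ∀ α : I, P α (fun β γ => F β γ) (fun x => F α x) := by
  choose row hrow using hP
  let f : ∀ α : I, Iic α → C := wellFounded_lt.fix fun α ih => row α fun β γ =>
    if h : γ ≤ β then ih β β.2 ⟨γ, h⟩ else ih γ γ.2 ⟨β, le_of_not_ge h⟩
  let F : I → I → C := fun a b => if h : b ≤ a then f a ⟨b, h⟩ else f b ⟨a, le_of_not_ge h⟩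
  have hf (α : I) : f α = row α fun β γ => F β γ := wellFounded_lt.fix_eq _ α
  have hF (α : I) : (fun x : Iic α => F α x) = f α := funext fun x => dif_pos x.2
  refine ⟨F, fun a b => ?_, fun α => ?_⟩
  · obtain hab | rfl | hab := lt_trichotomy a b
    · simp only [F, hab.le, hab.not_ge, dite_true, dite_false]
    · rfl
    · simp only [F, hab.le, hab.not_ge, dite_true, dite_false]
  · rw [hF, hf]
    exact hrow α _

theorem mk_compl_singleton {X : Type*} [Infinite X] (x : X) : #({x}ᶜ : Set X) = #X := by
  refine Cardinal.mk_compl_of_infinite _ ?_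
  rw [Cardinal.mk_singleton]
  exact Cardinal.one_lt_aleph0.trans_le (Cardinal.aleph0_le_mk X)

theorem exists_embedding_forall_ne {X C : Type*} [Infinite C] (f : X ↪ C) (c : C) :
    ∃ g : X ↪ C, ∀ x, g x ≠ c := by
  obtain ⟨φ⟩ := Cardinal.eq.1 (mk_compl_singleton c).symm
  exact ⟨(f.trans φ.toEmbedding).trans (Function.Embedding.subtype _), fun x => (φ (f x)).2⟩

theorem exists_identifying {X C : Type*} [Infinite C] (f : X ↪ C) (x y : X) (c : C) :
    ∃ r : X → C, r x = c ∧ r y = c ∧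
      ∀ u v, u ≠ v → r u = r v → r u = c ∧ s(u, v) = s(x, y) := by
  classical
  obtain ⟨g, hg⟩ := exists_embedding_forall_ne f c
  refine ⟨fun u => if u = x ∨ u = y then c else g u, by simp, by simp, fun u v huv h => ?_⟩
  have hgu := hg u
  have hgv := hg v
  have hinj := g.injective.ne huv
  rw [Sym2.eq_iff]
  grind

section Row

variable {I C : Type*} [LinearOrder I]

/-- The row `r` of a vertex `α` extends the colouring `G` of the vertices below `α` economically,
and it carries out the task of joining `x` and `y` in colour `c`, if `x` and `y` are distinct
vertices of `S` below `α` that `G` does not yet join in that colour. -/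
structure IsTaskRow (S : Set I) (x y : I) (c : C) {α : I} (G : Iio α → Iio α → C)
    (r : Iic α → C) : Prop where
  economical : ∀ u v : Iic α, u ≠ v → r u = r v → ∃ (hu : u < α) (hv : v < α),
    (u : I) ∈ S ∧ (v : I) ∈ S ∧ ∀ β, ¬ IsCherry G (r u) β ⟨u, hu⟩ ⟨v, hv⟩
  joined : ∀ (hx : x < α) (hy : y < α), x ∈ S → y ∈ S → x ≠ y →
    (∃ β, IsCherry G c β ⟨x, hx⟩ ⟨y, hy⟩) ∨ r ⟨x, hx.le⟩ = c ∧ r ⟨y, hy.le⟩ = c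

theorem exists_isTaskRow [Infinite C] {α : I} (f : Iic α ↪ C) (S : Set I) (x y : I) (c : C)
    (G : Iio α → Iio α → C) : ∃ r, IsTaskRow S x y c G r := by
  by_cases htask : ∃ (hx : x < α) (hy : y < α), x ∈ S ∧ y ∈ S ∧
    ∀ β, ¬ IsCherry G c β ⟨x, hx⟩ ⟨y, hy⟩
  · obtain ⟨hx, hy, hxS, hyS, hnew⟩ := htask
    obtain ⟨r, hrx, hry, hr⟩ := exists_identifying f ⟨x, hx.le⟩ ⟨y, hy.le⟩ c
    refine ⟨r, fun u v huv h => ?_, fun _ _ _ _ _ => .inr ⟨hrx, hry⟩⟩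
    obtain ⟨huc, hs⟩ := hr u v huv h
    rw [huc]
    obtain ⟨rfl, rfl⟩ | ⟨rfl, rfl⟩ := Sym2.eq_iff.1 hs
    · exact ⟨hx, hy, hxS, hyS, hnew⟩
    · exact ⟨hy, hx, hyS, hxS, fun β hβ => hnew β hβ.symm⟩
  · refine ⟨f, fun u v huv h => absurd (f.injective h) huv, fun hx hy hxS hyS _ => .inl ?_⟩
    by_contra! hnew
    exact htask ⟨hx, hy, hxS, hyS, hnew⟩

end Row

theorem exists_forall_exists_gt_eq {I T : Type u} [LinearOrder I] [Infinite I] [Nonempty T]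
    (hI : ∀ x : I, #(Iic x) < #I) (hT : #T ≤ #I) :
    ∃ e : I → T, ∀ t x, ∃ α > x, e α = t := by
  have hcard : #I = #(T × I) := by
    rw [Cardinal.mk_prod, Cardinal.lift_id, Cardinal.lift_id,
      Cardinal.mul_eq_right (Cardinal.aleph0_le_mk I) hT (Cardinal.mk_ne_zero T)]
  obtain ⟨φ⟩ := Cardinal.eq.1 hcard
  refine ⟨fun α => (φ α).1, fun t x => ?_⟩
  by_contra! hlarge
  have hle (i : I) : φ.symm (t, i) ≤ x := not_lt.1 fun hlt => hlarge _ hlt (by simp)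
  have hinj : Function.Injective fun i => (⟨φ.symm (t, i), hle i⟩ : Iic x) := fun i j h =>
    congrArg Prod.snd (φ.symm.injective (congrArg Subtype.val h))
  exact (hI x).not_ge (Cardinal.mk_le_of_injective hinj)

section Construction

variable {I C : Type u} [LinearOrder I] [WellFoundedLT I] [Infinite C]

theorem exists_economicalOn_saturatedOn (hIic : ∀ x : I, #(Iic x) < #I)
    (hIicC : ∀ x : I, #(Iic x) ≤ #C) (hCI : #C ≤ #I) (S : Set I) :
    ∃ F : I → I → C, (∀ a b, F a b = F b a) ∧ EconomicalOn F S ∧ SaturatedOn F S := by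
  have hI : ℵ₀ ≤ #I := (Cardinal.aleph0_le_mk C).trans hCI
  have : Infinite I := Cardinal.infinite_iff.2 hI
  have htasks : #(I × I × C) ≤ #I := by
    simp only [Cardinal.mk_prod, Cardinal.lift_id]
    exact Cardinal.mul_le_of_le hI le_rfl (Cardinal.mul_le_of_le hI le_rfl hCI)
  obtain ⟨task, htask⟩ := exists_forall_exists_gt_eq hIic htasks
  obtain ⟨F, hsymm, hF⟩ := exists_symm_forall_row fun α G =>
    exists_isTaskRow (Classical.choice (hIicC α)) S (task α).1 (task α).2.1 (task α).2.2 G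
  refine ⟨F, hsymm, ?_, fun x hx y hy hxy c => ?_⟩
  · rintro _ α x y hxα hyα hxy ⟨rfl, hcy⟩
    obtain ⟨_, _, hx, hy, hnew⟩ :=
      (hF α).economical ⟨x, hxα⟩ ⟨y, hyα⟩ (Subtype.mk_eq_mk.not.2 hxy) hcy.symm
    exact ⟨hx, hy, fun β hβ => hnew ⟨β, hβ⟩⟩
  · obtain ⟨α, hα, hαtask⟩ := htask (x, y, c) (max x y)
    have hrow := hF α
    rw [hαtask] at hrow
    obtain ⟨hxα, hyα⟩ := max_lt_iff.1 hα
    obtain ⟨β, hβ⟩ | hcherry := hrow.joined hxα hyα hx hy hxy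
    · exact ⟨β, hβ⟩
    · exact ⟨α, hcherry⟩

theorem exists_isMaximalK22Free_saturatedOn_univ (hIic : ∀ x : I, #(Iic x) ≤ #C)
    (hCI : #C < #I) : ∃ F : I → I → C, IsMaximalK22Free F ∧ SaturatedOn F univ := by
  obtain ⟨F, hsymm, heco, hsat⟩ :=
    exists_economicalOn_saturatedOn (fun x => (hIic x).trans_lt hCI) hIic hCI.le univ
  exact ⟨F, heco.isMaximalK22Free hsat hsymm (by rwa [Cardinal.mk_univ]), hsat⟩

theorem exists_isMaximalK22Free_not_saturatedOn_univ (hIic : ∀ x : I, #(Iic x) ≤ #C)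
    (hCI : #C < #I) : ∃ F : I → I → C, IsMaximalK22Free F ∧ ¬ SaturatedOn F univ := by
  have : Infinite I := Cardinal.infinite_iff.2 ((Cardinal.aleph0_le_mk C).trans hCI.le)
  let _ : OrderBot I := WellFoundedLT.toOrderBot I
  obtain ⟨q, hq⟩ := exists_covBy_of_wellFoundedLT (not_isMax_bot (α := I))
  obtain ⟨F, hsymm, heco, hsat⟩ :=
    exists_economicalOn_saturatedOn (fun x => (hIic x).trans_lt hCI) hIic hCI.le {⊥}ᶜ
  exact ⟨F, heco.isMaximalK22Free hsat hsymm (by rwa [mk_compl_singleton]),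
    heco.not_saturatedOn_univ isMin_bot (notMem_compl_iff.2 rfl) hq⟩

end Construction

theorem mk_Iic_toType_ord_succ_le {κ : Cardinal.{u}} (hκ : ℵ₀ ≤ κ)
    (x : (Order.succ κ).ord.ToType) : #(Iic x) ≤ κ := by
  have hmk : #(Order.succ κ).ord.ToType = Order.succ κ := Cardinal.mk_ord_toType _
  have hlt := Cardinal.mk_Iic_lt x (by simp) (by
    rw [hmk]
    exact hκ.trans (Order.le_succ κ))
  rw [hmk] at hlt
  exact Order.lt_succ_iff.1 hlt

theorem stmt13 (κ : Cardinal.{u}) (hκ : Cardinal.aleph0 ≤ κ) :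
    ∃ (A B C : Type u) (F₁ F₂ : A → B → C),
      Cardinal.mk A = Order.succ κ ∧ Cardinal.mk B = Order.succ κ ∧
      Cardinal.mk C = κ ∧
      (NoMonoK22 F₁ ∧ AInextensible F₁ ∧ BInextensible F₁) ∧
      (NoMonoK22 F₂ ∧ AInextensible F₂ ∧ BInextensible F₂) ∧
      ¬ ∃ (σ : A ≃ A) (τ : B ≃ B) (ρ : C ≃ C),
          ∀ (a : A) (b : B), ρ (F₁ a b) = F₂ (σ a) (τ b) := by
  induction κ using Cardinal.inductionOn with | _ C
  let I : Type u := (Order.succ #C).ord.ToType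
  have hI : #I = Order.succ #C := Cardinal.mk_ord_toType _
  have hCI : #C < #I := (Order.lt_succ #C).trans_eq hI.symm
  have hIic (x : I) : #(Iic x) ≤ #C := mk_Iic_toType_ord_succ_le hκ x
  have : Infinite C := Cardinal.infinite_iff.2 hκ
  obtain ⟨F₁, hmax₁, hsat₁⟩ := exists_isMaximalK22Free_saturatedOn_univ hIic hCI
  obtain ⟨F₂, hmax₂, hsat₂⟩ := exists_isMaximalK22Free_not_saturatedOn_univ hIic hCI
  refine ⟨I, I, C, F₁, F₂, hI, hI, rfl, hmax₁, hmax₂, ?_⟩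
  rintro ⟨σ, τ, ρ, h⟩
  have himage := hsat₁.image ρ.surjective h
  rw [image_univ, τ.range_eq_univ] at himage
  exact hsat₂ himage
end

section
/- Let κ be an infinite cardinal and suppose (A, B, C, F, C₀, e, l₁, l₂, m, S) and (A', B', C', F', C₀', e', l₁', l₂', m', S') are two tuples each satisfying the Step-II conditions for κ: the Step-I data and conditions (F satisfies (*); #A = #B = κ⁺, #C = κ; C₀ ⊆ C with #C₀ = #(C \ C₀) = κ; e a bijection from ordinals below κ onto C₀; l₁, l₂ with pairwise distinct values and the prescribed 2-path spectrum on each pair l₁ α, l₂ α), together with an injective m from the ordinals below κ⁺ into A, range disjoint from the l-points, pairwise distinct subsets S_α ⊆ C₀ (0 < α < κ⁺) with #S_α = #(C₀ \ S_α) = κ, such that for 0 < α < κ⁺ a monochromatic 2-path on m 0, m α colored c exists exactly when c ∈ S_α, and all other pairs of distinct points of A admit monochromatic 2-paths in every color not thus forbidden. If σ : A ≃ A', τ : B ≃ B', ρ : C ≃ C' are bijections with ρ (F a b) = F' (σ a) (τ b) for all a, b, then σ (m 0) = m' 0, σ maps the range of m onto the range of m', and whenever σ (m α) = m' α' with 0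 < α, α' < κ⁺, then ρ maps S_α onto S'_{α'}. -/
universe u

lemma ord_succ_pos (κ : Cardinal.{u}) : (0 : Ordinal.{u}) < (Order.succ κ).ord := by
  rw [Cardinal.lt_ord]
  simp [Order.bot_lt_succ κ]

/-- The ordinal `0` as an ordinal below `κ⁺`. -/
def ordZero (κ : Cardinal.{u}) : {o : Ordinal.{u} // o < (Order.succ κ).ord} :=
  ⟨0, ord_succ_pos κ⟩

/-- The data of a Step-II model: a coloring `F`, the distinguished color set
`C₀` enumerated by `e`, the pairs `l₁ α, l₂ α`, the points `m α`, and the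
coded subsets `S α ⊆ C₀`. -/
structure StepIIData (κ : Cardinal.{u}) (A B C : Type u) where
  F : A → B → C
  C₀ : Set C
  e : {o : Ordinal.{u} // o < κ.ord} ≃ C₀
  l₁ : {o : Ordinal.{u} // o < κ.ord} → A
  l₂ : {o : Ordinal.{u} // o < κ.ord} → A
  m : {o : Ordinal.{u} // o < (Order.succ κ).ord} → A
  S : {o : Ordinal.{u} // o < (Order.succ κ).ord} → Set C

/-- The Step-II conditions (Lemma `Step2` of the paper). -/
def StepIIConds (κ : Cardinal.{u}) {A B C : Type u} (d : StepIIData κ A B C) : Prop :=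
  Cardinal.mk A = Order.succ κ ∧ Cardinal.mk B = Order.succ κ ∧
  Cardinal.mk C = κ ∧
  Cardinal.mk d.C₀ = κ ∧ Cardinal.mk ↥(d.C₀ᶜ) = κ ∧
  Function.Injective d.l₁ ∧ Function.Injective d.l₂ ∧
  (∀ α β, d.l₁ α ≠ d.l₂ β) ∧
  Function.Injective d.m ∧
  (∀ γ α, d.m γ ≠ d.l₁ α ∧ d.m γ ≠ d.l₂ α) ∧
  (∀ α, 0 < α.1 → d.S α ⊆ d.C₀) ∧
  (∀ α β, 0 < α.1 → 0 < β.1 → α ≠ β → d.S α ≠ d.S β) ∧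
  (∀ α, 0 < α.1 → Cardinal.mk (d.S α) = κ) ∧
  (∀ α, 0 < α.1 → Cardinal.mk ↥(d.C₀ \ d.S α) = κ) ∧
  NoMonoK22 d.F ∧
  (∀ (α : {o : Ordinal.{u} // o < κ.ord}) (c : C),
    (∃ b : B, d.F (d.l₁ α) b = c ∧ d.F (d.l₂ α) b = c) ↔
      (c ∉ d.C₀ ∨ ∃ β, α < β ∧ c = (d.e β : C))) ∧
  (∀ α, 0 < α.1 → ∀ c : C,
    (∃ b : B, d.F (d.m (ordZero κ)) b = c ∧ d.F (d.m α) b = c) ↔ c ∈ d.S α) ∧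
  (∀ a a' : A, a ≠ a' →
    (∀ α, ({a, a'} : Set A) ≠ {d.l₁ α, d.l₂ α}) →
    (∀ α, 0 < α.1 → ({a, a'} : Set A) ≠ {d.m (ordZero κ), d.m α}) →
    ∀ c : C, ∃ b : B, d.F a b = c ∧ d.F a' b = c)

/-!
Isomorphisms of colorings carry the set of colors of monochromatic 2-paths on a pair `a, a'` to the
corresponding set on the image pair, so they preserve the graph of those pairs that miss some color.
In a Step-II model this graph is the disjoint union of the matching of the pairs `l₁ α, l₂ α` and
the star with center `m 0` and leaves `m α`, `0 < α`. Having at least two leaves, the star is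
recognized by its center, the only vertex with more than one neighbor, and `S α` is recovered as the
set of colors of 2-paths on `m 0, m α`.
-/

open Set Function

section Coloring

variable {A B C A' B' C' : Type*}

/-- The set of colors of the monochromatic 2-paths on `a, a'`. -/
def pathColors (F : A → B → C) (a a' : A) : Set C :=
  {c | ∃ b, F a b = c ∧ F a' b = c}

lemma pathColors_comm (F : A → B → C) (a a' : A) : pathColors F a a' = pathColors F a' a := by
  simp only [pathColors, and_comm]

lemma image_pathColors {F : A → B → C} {F' : A' → B' → C'} {σ : A → A'} {τ : B → B'} {ρ : C → C'}
    (hτ : Surjective τ) (hρ : Injective ρ) (h : ∀ a b, ρ (F a b) = F' (σ a) (τ b)) (a a' : A) :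
    ρ '' pathColors F a a' = pathColors F' (σ a) (σ a') := by
  refine Subset.antisymm ?_ ?_
  · rintro _ ⟨c, ⟨b, rfl, hb⟩, rfl⟩
    exact ⟨τ b, (h a b).symm, by rw [← h, hb]⟩
  · rintro c' ⟨b', rfl, hb'⟩
    obtain ⟨b, rfl⟩ := hτ b'
    refine ⟨F a b, ⟨b, rfl, hρ ?_⟩, h a b⟩
    rw [h, h, hb']

/-- The graph on `A` joining two distinct points when some color has no monochromatic 2-path on
them. -/
def deficiencyGraph (F : A → B → C) : SimpleGraph A where
  Adj a a' := a ≠ a' ∧ pathColors F a a' ≠ univ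
  symm := ⟨fun a a' h => ⟨h.1.symm, pathColors_comm F a a' ▸ h.2⟩⟩
  loopless := ⟨fun _ h => h.1 rfl⟩

/-- An isomorphism of colorings, seen as an isomorphism of their deficiency graphs. -/
def deficiencyGraphIso {F : A → B → C} {F' : A' → B' → C'} (σ : A ≃ A') {τ : B → B'}
    (hτ : Surjective τ) (ρ : C ≃ C') (h : ∀ a b, ρ (F a b) = F' (σ a) (τ b)) :
    deficiencyGraph F ≃g deficiencyGraph F' where
  toEquiv := σ
  map_rel_iff' {a a'} := by
    have hρ : ρ '' pathColors F a a' = univ ↔ pathColors F a a' = univ := by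
      rw [← image_univ_of_surjective ρ.surjective, ρ.injective.image_injective.eq_iff]
    simp only [deficiencyGraph, ← image_pathColors hτ ρ.injective h, hρ, ne_eq, σ.injective.eq_iff]

end Coloring

section StarCoding

variable {A B C I J A' B' C' I' J' : Type*}

/-- The part of the Step-II conditions that isomorphisms detect, over arbitrary index types. The
pairs of distinct points with no 2-path of some color are the pairs `m o, m k` with `k ≠ o`, a star
with center `m o`, and possibly some of the pairs `l₁ i, l₂ i`, which are disjoint from each other
and from the star. The 2-paths on `m o, m k` have exactly the colors in `S k`. -/
structure IsStarCoding (F : A → B → C) (l₁ l₂ : J → A) (m : I → A) (o : I) (S : I → Set C) :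
    Prop where
  injective_l₁ : Injective l₁
  injective_l₂ : Injective l₂
  l₁_ne_l₂ : ∀ i j, l₁ i ≠ l₂ j
  injective_m : Injective m
  m_ne_l₁ : ∀ k i, m k ≠ l₁ i
  m_ne_l₂ : ∀ k i, m k ≠ l₂ i
  ne_univ : ∀ k, k ≠ o → S k ≠ univ
  pathColors_center : ∀ k, k ≠ o → pathColors F (m o) (m k) = S k
  pathColors_eq_univ : ∀ a a', a ≠ a' → (∀ i, ({a, a'} : Set A) ≠ {l₁ i, l₂ i}) →
    (∀ k, k ≠ o → ({a, a'} : Set A) ≠ {m o, m k}) → pathColors F a a' = univ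

namespace IsStarCoding

variable {F : A → B → C} {l₁ l₂ : J → A} {m : I → A} {o : I} {S : I → Set C}
  {F' : A' → B' → C'} {l₁' l₂' : J' → A'} {m' : I' → A'} {o' : I'} {S' : I' → Set C'}

lemma pair_eq_of_adj (h : IsStarCoding F l₁ l₂ m o S) {a a' : A}
    (ha : (deficiencyGraph F).Adj a a') :
    (∃ i, ({a, a'} : Set A) = {l₁ i, l₂ i}) ∨ ∃ k ≠ o, ({a, a'} : Set A) = {m o, m k} := by
  by_contra! hcon
  exact ha.2 (h.pathColors_eq_univ a a' ha.1 hcon.1 hcon.2)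

lemma eq_l₂_of_adj_l₁ (h : IsStarCoding F l₁ l₂ m o S) {i : J} {x : A}
    (hx : (deficiencyGraph F).Adj (l₁ i) x) : x = l₂ i := by
  have hpair := h.pair_eq_of_adj hx
  simp only [pair_eq_pair_iff] at hpair
  grind [h.injective_l₁.eq_iff, h.l₁_ne_l₂, h.m_ne_l₁]

lemma eq_l₁_of_adj_l₂ (h : IsStarCoding F l₁ l₂ m o S) {i : J} {x : A}
    (hx : (deficiencyGraph F).Adj (l₂ i) x) : x = l₁ i := by
  have hpair := h.pair_eq_of_adj hx
  simp only [pair_eq_pair_iff] at hpair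
  grind [h.injective_l₂.eq_iff, h.l₁_ne_l₂, h.m_ne_l₂]

lemma eq_center_of_adj_leaf (h : IsStarCoding F l₁ l₂ m o S) {k : I} (hk : k ≠ o) {x : A}
    (hx : (deficiencyGraph F).Adj (m k) x) : x = m o := by
  have hpair := h.pair_eq_of_adj hx
  simp only [pair_eq_pair_iff] at hpair
  grind [h.injective_m.eq_iff, h.m_ne_l₁, h.m_ne_l₂]

lemma neighborSet_center (h : IsStarCoding F l₁ l₂ m o S) :
    (deficiencyGraph F).neighborSet (m o) = m '' {o}ᶜ := by
  ext x
  constructor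
  · intro hx
    have hpair := h.pair_eq_of_adj hx
    simp only [pair_eq_pair_iff] at hpair
    grind [h.injective_m.eq_iff, h.m_ne_l₁, h.m_ne_l₂]
  · rintro ⟨k, hk, rfl⟩
    exact ⟨h.injective_m.ne (Ne.symm hk), h.pathColors_center k hk ▸ h.ne_univ k hk⟩

lemma eq_center_of_neighborSet_nontrivial (h : IsStarCoding F l₁ l₂ m o S) {a : A}
    (ha : ((deficiencyGraph F).neighborSet a).Nontrivial) : a = m o := by
  obtain ⟨x, hx, y, hy, hxy⟩ := ha
  by_contra hao
  rcases h.pair_eq_of_adj hx with ⟨i, hpair⟩ | ⟨k, hk, hpair⟩ <;>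
    rcases pair_eq_pair_iff.1 hpair with ⟨rfl, -⟩ | ⟨rfl, -⟩
  · exact hxy ((h.eq_l₂_of_adj_l₁ hx).trans (h.eq_l₂_of_adj_l₁ hy).symm)
  · exact hxy ((h.eq_l₁_of_adj_l₂ hx).trans (h.eq_l₁_of_adj_l₂ hy).symm)
  · exact hao rfl
  · exact hxy ((h.eq_center_of_adj_leaf hk hx).trans (h.eq_center_of_adj_leaf hk hy).symm)

lemma insert_neighborSet_center (h : IsStarCoding F l₁ l₂ m o S) :
    insert (m o) ((deficiencyGraph F).neighborSet (m o)) = range m := by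
  rw [h.neighborSet_center, insert_image_compl_eq_range]

lemma map_center (h : IsStarCoding F l₁ l₂ m o S) (h' : IsStarCoding F' l₁' l₂' m' o' S')
    (hI : ({o}ᶜ : Set I).Nontrivial) (φ : deficiencyGraph F ≃g deficiencyGraph F') :
    φ (m o) = m' o' := by
  apply h'.eq_center_of_neighborSet_nontrivial
  rw [← φ.image_neighborSet, h.neighborSet_center]
  exact (hI.image h.injective_m).image φ.injective

lemma image_range (h : IsStarCoding F l₁ l₂ m o S) (h' : IsStarCoding F' l₁' l₂' m' o' S')
    (hI : ({o}ᶜ : Set I).Nontrivial) (φ : deficiencyGraph F ≃g deficiencyGraph F') :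
    φ '' range m = range m' := by
  rw [← h.insert_neighborSet_center, ← h'.insert_neighborSet_center, image_insert_eq,
    φ.image_neighborSet, h.map_center h' hI φ]

end IsStarCoding

theorem stmt17_general {F : A → B → C} {l₁ l₂ : J → A} {m : I → A} {o : I} {S : I → Set C}
    {F' : A' → B' → C'} {l₁' l₂' : J' → A'} {m' : I' → A'} {o' : I'} {S' : I' → Set C'}
    (h : IsStarCoding F l₁ l₂ m o S) (h' : IsStarCoding F' l₁' l₂' m' o' S')
    (hI : ({o}ᶜ : Set I).Nontrivial) (σ : A ≃ A') {τ : B → B'} (hτ : Surjective τ) (ρ : C ≃ C')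
    (hiso : ∀ a b, ρ (F a b) = F' (σ a) (τ b)) :
    σ (m o) = m' o' ∧ σ '' range m = range m' ∧
      ∀ k k', k ≠ o → σ (m k) = m' k' → ρ '' S k = S' k' := by
  let φ := deficiencyGraphIso σ hτ ρ hiso
  have hcenter : σ (m o) = m' o' := h.map_center h' hI φ
  refine ⟨hcenter, h.image_range h' hI φ, fun k k' hk hkk' => ?_⟩
  have hk' : k' ≠ o' := by
    rintro rfl
    exact hk (h.injective_m (σ.injective (hkk'.trans hcenter.symm)))
  rw [← h.pathColors_center k hk, ← h'.pathColors_center k' hk',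
    image_pathColors hτ ρ.injective hiso, hcenter, hkk']

end StarCoding

section StepII

variable {κ : Cardinal.{u}}

lemma natCast_lt_ord_succ {n : ℕ} (hn : (n : Cardinal.{u}) ≤ κ) :
    (n : Ordinal.{u}) < (Order.succ κ).ord := by
  rwa [Cardinal.lt_ord, Ordinal.card_nat, Order.lt_succ_iff]

lemma ne_ordZero_iff {α : {o : Ordinal.{u} // o < (Order.succ κ).ord}} :
    α ≠ ordZero κ ↔ 0 < α.1 := by
  rw [pos_iff_ne_zero, ne_eq, Subtype.ext_iff, ordZero]

lemma nontrivial_compl_ordZero (hκ : 2 ≤ κ) : ({ordZero κ}ᶜ : Set _).Nontrivial := by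
  have h₁ : ((1 : ℕ) : Ordinal.{u}) < (Order.succ κ).ord :=
    natCast_lt_ord_succ (by simpa using one_le_two.trans hκ)
  have h₂ : ((2 : ℕ) : Ordinal.{u}) < (Order.succ κ).ord := natCast_lt_ord_succ hκ
  refine ⟨⟨_, h₁⟩, ne_ordZero_iff.2 ?_, ⟨_, h₂⟩, ne_ordZero_iff.2 ?_, ?_⟩ <;> simp

lemma StepIIConds.isStarCoding {A B C : Type u} {d : StepIIData κ A B C}
    (hd : StepIIConds κ d) (hκ : κ ≠ 0) :
    IsStarCoding d.F d.l₁ d.l₂ d.m (ordZero κ) d.S := by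
  obtain ⟨-, -, -, -, -, hl₁, hl₂, hl, hm, hml, -, -, -, hcompl, -, -, hpath, hfull⟩ := hd
  have hne_univ (α) (hα : 0 < α.1) : d.S α ≠ univ := by
    intro hS
    have hmk := hcompl α hα
    rw [hS, sdiff_univ, Cardinal.mk_eq_zero] at hmk
    exact hκ hmk.symm
  simp only [← ne_ordZero_iff] at hne_univ hpath hfull
  exact
    { injective_l₁ := hl₁
      injective_l₂ := hl₂
      l₁_ne_l₂ := hl
      injective_m := hm
      m_ne_l₁ := fun γ α => (hml γ α).1
      m_ne_l₂ := fun γ α => (hml γ α).2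
      ne_univ := hne_univ
      pathColors_center := fun α hα => Set.ext (hpath α hα)
      pathColors_eq_univ := fun a a' h hl hm => eq_univ_of_forall (hfull a a' h hl hm) }

end StepII

theorem stmt17 (κ : Cardinal.{u}) (hκ : Cardinal.aleph0 ≤ κ)
    {A B C A' B' C' : Type u}
    (d : StepIIData κ A B C) (d' : StepIIData κ A' B' C')
    (hd : StepIIConds κ d) (hd' : StepIIConds κ d')
    (σ : A ≃ A') (τ : B ≃ B') (ρ : C ≃ C')
    (hiso : ∀ (a : A) (b : B), ρ (d.F a b) = d'.F (σ a) (τ b)) :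
    σ (d.m (ordZero κ)) = d'.m (ordZero κ) ∧
    σ '' Set.range d.m = Set.range d'.m ∧
    (∀ α α', 0 < α.1 → 0 < α'.1 → σ (d.m α) = d'.m α' →
      ρ '' d.S α = d'.S α') := by
  have hκ₂ : 2 ≤ κ := Cardinal.natCast_le_aleph0.trans hκ
  have hκ₀ : κ ≠ 0 := (Cardinal.aleph0_pos.trans_le hκ).ne'
  obtain ⟨hcenter, hrange, hS⟩ := stmt17_general (hd.isStarCoding hκ₀) (hd'.isStarCoding hκ₀)
    (nontrivial_compl_ordZero hκ₂) σ τ.surjective ρ hiso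
  exact ⟨hcenter, hrange, fun α α' hα _ => hS α α' (ne_ordZero_iff.2 hα)⟩
end
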